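/- Let w̃ ∈ W^{3,1}(ℝ⁴) be compactly supported with DΔw̃ ∈ L^{4/3,1}(ℝ⁴). Then for every x ∈ ℝ⁴, |w̃(x) − ⨍ w̃| ≤ C ‖DG‖_{L^{4,∞}(ℝ⁴)} ‖DΔw̃‖_{L^{4/3,1}(ℝ⁴)}, where G is the fundamental solution of Δ² in ℝ⁴; in particular osc(w̃) ≤ C ‖DΔw̃‖_{L^{4/3,1}(ℝ⁴)}. -/

import Mathlib

open MeasureTheory Metric Real Filter ENNReal

noncomputable section

abbrev E4 := EuclideanSpace ℝ (Fin 4)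

/-- The Laplacian of a scalar function on `ℝ⁴`. -/
def lap (g : E4 → ℝ) (x : E4) : ℝ :=
  ∑ i : Fin 4, fderiv ℝ (fun y => fderiv ℝ g y (EuclideanSpace.single i 1)) x
    (EuclideanSpace.single i 1)

/-- Non-increasing rearrangement of `|f|` on `[0, ∞)`. -/
def rearr (f : E4 → ℝ) (t : ℝ) : ℝ :=
  sInf {s : ℝ | 0 ≤ s ∧ (volume {x : E4 | s < |f x|}).toReal ≤ t}

/-- The Lorentz `L^{p,1}` norm, `∫₀^∞ t^{1/p−1} f**(t) dt` with `f**(t) = t⁻¹∫₀ᵗ f*`. -/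
def Lp1norm (p : ℝ) (f : E4 → ℝ) : ℝ :=
  ∫ t in Set.Ioi (0:ℝ), t ^ (1/p - 1) * ((1/t) * ∫ s in Set.Ioo 0 t, rearr f s)

/-- The weak-`L^p` quasi-norm `sup_{λ>0} λ |{|f| > λ}|^{1/p}`. -/
def wnorm (p : ℝ) (f : E4 → ℝ) : ℝ≥0∞ :=
  ⨆ l ∈ Set.Ioi (0:ℝ), ENNReal.ofReal l * volume {x : E4 | l < |f x|} ^ (1/p)


abbrev e4 (i : Fin 4) : E4 := EuclideanSpace.single i 1

def ss (x : E4) (ε : ℝ) (y : E4) : ℝ := ‖y - x‖ ^ 2 + ε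

lemma ss_pos (x : E4) {ε : ℝ} (hε : 0 < ε) (y : E4) : 0 < ss x ε y := by
  unfold ss; positivity

lemma ss_contDiff (x : E4) (ε : ℝ) : ContDiff ℝ 3 (ss x ε) := by
  unfold ss
  exact ((contDiff_id.sub contDiff_const).norm_sq ℝ).add contDiff_const

lemma ss_hasFDerivAt (x : E4) (ε : ℝ) (y : E4) :
    HasFDerivAt (ss x ε) (2 • (innerSL ℝ (y - x))) y := by
  have h := (((hasFDerivAt_id (𝕜 := ℝ) y).sub_const x).norm_sq).add_const ε
  refine h.congr_fderiv ?_
  ext v; simp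

lemma coord_hasFDerivAt (x : E4) (i : Fin 4) (y : E4) :
    HasFDerivAt (fun y : E4 => (y - x) i) (EuclideanSpace.proj i : E4 →L[ℝ] ℝ) y := by
  have h := (EuclideanSpace.proj i : E4 →L[ℝ] ℝ).hasFDerivAt.comp y
    ((hasFDerivAt_id (𝕜 := ℝ) y).sub_const x)
  exact h

lemma inv_pow_hasFDerivAt (x : E4) {ε : ℝ} (hε : 0 < ε) (m : ℕ) (y : E4) :
    HasFDerivAt (fun y => ((ss x ε y)⁻¹) ^ m)
      ((-(m : ℝ) * ((ss x ε y)⁻¹) ^ (m+1)) • (2 • (innerSL ℝ (y - x)))) y := by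
  have hs := (ss_pos x hε y).ne'
  have h1 : HasDerivAt (fun t : ℝ => (t⁻¹) ^ m) (-(m : ℝ) * ((ss x ε y)⁻¹) ^ (m+1)) (ss x ε y) := by
    have := (hasDerivAt_inv hs).pow m
    refine this.congr_deriv ?_
    rcases m with _ | m
    · simp
    · simp; field_simp; ring
  exact h1.comp_hasFDerivAt y (ss_hasFDerivAt x ε y)

lemma inner_e4 (z : E4) (i : Fin 4) : inner ℝ z (e4 i) = z i := by
  simp [e4, EuclideanSpace.inner_single_right]

/-- derivative of the radial power in direction i -/
lemma inv_pow_fderiv (x : E4) {ε : ℝ} (hε : 0 < ε) (m : ℕ) (y : E4) (i : Fin 4) :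
    fderiv ℝ (fun y => ((ss x ε y)⁻¹) ^ m) y (e4 i)
      = -2 * m * ((ss x ε y)⁻¹) ^ (m+1) * (y - x) i := by
  rw [(inv_pow_hasFDerivAt x hε m y).fderiv]
  have := inner_e4 (y - x) i
  simp only [smul_apply, innerSL_apply_apply, this, smul_eq_mul, nsmul_eq_mul]
  push_cast; ring

lemma coord_inv_pow_hasFDerivAt (x : E4) {ε : ℝ} (hε : 0 < ε) (m : ℕ) (y : E4) (i : Fin 4) :
    HasFDerivAt (fun y => (y - x) i * ((ss x ε y)⁻¹) ^ m)
      ((y - x) i • ((-(m : ℝ) * ((ss x ε y)⁻¹) ^ (m+1)) • (2 • (innerSL ℝ (y - x))))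
        + (((ss x ε y)⁻¹) ^ m) • (EuclideanSpace.proj i : E4 →L[ℝ] ℝ)) y :=
  (coord_hasFDerivAt x i y).mul (inv_pow_hasFDerivAt x hε m y)

lemma coord_inv_pow_fderiv (x : E4) {ε : ℝ} (hε : 0 < ε) (m : ℕ) (y : E4) (i : Fin 4) :
    fderiv ℝ (fun y => (y - x) i * ((ss x ε y)⁻¹) ^ m) y (e4 i)
      = ((ss x ε y)⁻¹) ^ m - 2 * m * ((ss x ε y)⁻¹) ^ (m+1) * ((y - x) i) ^ 2 := by
  rw [(coord_inv_pow_hasFDerivAt x hε m y i).fderiv]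
  have := inner_e4 (y - x) i
  simp only [add_apply, smul_apply, innerSL_apply_apply, this, smul_eq_mul, nsmul_eq_mul]
  simp [e4]
  ring

lemma div_coord (x : E4) {ε : ℝ} (hε : 0 < ε) (m : ℕ) (y : E4) :
    ∑ i, fderiv ℝ (fun y => (y - x) i * ((ss x ε y)⁻¹) ^ m) y (e4 i)
      = (4 - 2 * m) * ((ss x ε y)⁻¹) ^ m + 2 * m * ε * ((ss x ε y)⁻¹) ^ (m+1) := by
  simp_rw [coord_inv_pow_fderiv x hε m y]
  rw [Finset.sum_sub_distrib, ← Finset.mul_sum]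
  have h1 : ∑ i, ((y - x) i) ^ 2 = ss x ε y - ε := by
    simp [ss, EuclideanSpace.norm_sq_eq]
  rw [h1]
  have hs := (ss_pos x hε y).ne'
  simp
  field_simp
  ring

/-- integration by parts against a compactly supported function -/
lemma ibp {f g : E4 → ℝ} (hf : ContDiff ℝ 1 f) (hg : ContDiff ℝ 1 g) (hgc : HasCompactSupport g)
    (v : E4) : ∫ y, f y * fderiv ℝ g y v = - ∫ y, fderiv ℝ f y v * g y := by
  have hf' : Continuous (fun y => fderiv ℝ f y v) :=
    (hf.continuous_fderiv (by norm_num)).clm_apply continuous_const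
  have hg' : Continuous (fun y => fderiv ℝ g y v) :=
    (hg.continuous_fderiv (by norm_num)).clm_apply continuous_const
  have hgc' : HasCompactSupport (fun y => fderiv ℝ g y v) := hgc.fderiv_apply ℝ v
  apply integral_mul_fderiv_eq_neg_fderiv_mul_of_integrable
  · exact (hf'.mul hg.continuous).integrable_of_hasCompactSupport hgc.mul_left
  · exact (hf.continuous.mul hg').integrable_of_hasCompactSupport hgc'.mul_left
  · exact (hf.continuous.mul hg.continuous).integrable_of_hasCompactSupport hgc.mul_left
  · exact fun y _ => hf.differentiable (by norm_num) y
  · exact fun y _ => hg.differentiable (by norm_num) y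

lemma inv_pow_contDiff (x : E4) {ε : ℝ} (hε : 0 < ε) (m : ℕ) :
    ContDiff ℝ 1 (fun y => ((ss x ε y)⁻¹) ^ m) :=
  (((ss_contDiff x ε).of_le (by norm_num)).inv (fun y => (ss_pos x hε y).ne')).pow m

lemma coord_inv_pow_contDiff (x : E4) {ε : ℝ} (hε : 0 < ε) (m : ℕ) (i : Fin 4) :
    ContDiff ℝ 1 (fun y => (y - x) i * ((ss x ε y)⁻¹) ^ m) := by
  refine ContDiff.mul ?_ (inv_pow_contDiff x hε m)
  exact (EuclideanSpace.proj i : E4 →L[ℝ] ℝ).contDiff.comp (contDiff_id.sub contDiff_const)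

lemma sum_ibp (x : E4) {ε : ℝ} (hε : 0 < ε) (m : ℕ) {g : E4 → ℝ} (hg : ContDiff ℝ 1 g)
    (hgc : HasCompactSupport g) :
    ∑ i, ∫ y, ((y - x) i * ((ss x ε y)⁻¹) ^ m) * fderiv ℝ g y (e4 i)
      = - ∫ y, ((4 - 2 * m) * ((ss x ε y)⁻¹) ^ m + 2 * m * ε * ((ss x ε y)⁻¹) ^ (m+1)) * g y := by
  simp_rw [ibp (coord_inv_pow_contDiff x hε m _) hg hgc]
  rw [Finset.sum_neg_distrib, ← integral_finsetSum]
  · simp_rw [← Finset.sum_mul, div_coord x hε m]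
  · intro i _
    exact ((((coord_inv_pow_contDiff x hε m i).continuous_fderiv (by norm_num)).clm_apply
      continuous_const).mul hg.continuous).integrable_of_hasCompactSupport hgc.mul_left


lemma d1_contDiff {w : E4 → ℝ} (hw : ContDiff ℝ 3 w) (i : Fin 4) : ContDiff ℝ 2 (fun y => fderiv ℝ w y (e4 i)) :=
  (hw.fderiv_right (m := 2) (by norm_num)).clm_apply contDiff_const

lemma d2_contDiff {w : E4 → ℝ} (hw : ContDiff ℝ 3 w) (i : Fin 4) :
    ContDiff ℝ 1 (fun z => fderiv ℝ (fun y => fderiv ℝ w y (e4 i)) z (e4 i)) :=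
  ((d1_contDiff hw i).fderiv_right (m := 1) (by norm_num)).clm_apply contDiff_const

lemma lap_contDiff {w : E4 → ℝ} (hw : ContDiff ℝ 3 w) : ContDiff ℝ 1 (lap w) := by
  unfold lap
  exact ContDiff.sum fun i _ => d2_contDiff hw i

lemma d1_supp {w : E4 → ℝ} (hc : HasCompactSupport w) (i : Fin 4) : HasCompactSupport (fun y => fderiv ℝ w y (e4 i)) :=
  hc.fderiv_apply ℝ _

lemma d2_supp {w : E4 → ℝ} (hc : HasCompactSupport w) (i : Fin 4) :
    HasCompactSupport (fun z => fderiv ℝ (fun y => fderiv ℝ w y (e4 i)) z (e4 i)) :=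
  (d1_supp hc i).fderiv_apply ℝ _

lemma lap_supp {w : E4 → ℝ} (hc : HasCompactSupport w) : HasCompactSupport (lap w) := by
  have : lap w = ∑ i, (fun z => fderiv ℝ (fun y => fderiv ℝ w y (e4 i)) z (e4 i)) := by
    ext z; simp [lap]
  rw [this]
  simp only [Fin.sum_univ_four]
  exact (((d2_supp hc 0).add (d2_supp hc 1)).add (d2_supp hc 2)).add (d2_supp hc 3)

lemma lap_inv_pow {w : E4 → ℝ} (hw : ContDiff ℝ 3 w) (hc : HasCompactSupport w)
    (x : E4) {ε : ℝ} (hε : 0 < ε) (m : ℕ) :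
    ∫ y, ((ss x ε y)⁻¹) ^ m * lap w y =
     2 * m * ∫ y, ((2 - 2 * m) * ((ss x ε y)⁻¹) ^ (m+1)
       + 2 * (m + 1) * ε * ((ss x ε y)⁻¹) ^ (m+2)) * (- w y) := by
  unfold lap
  simp_rw [Finset.mul_sum]
  rw [integral_finsetSum]
  · have h1 : ∀ i, ∫ y, ((ss x ε y)⁻¹) ^ m *
        fderiv ℝ (fun y => fderiv ℝ w y (e4 i)) y (e4 i)
        = 2 * m * ∫ y, ((y - x) i * ((ss x ε y)⁻¹) ^ (m+1)) * fderiv ℝ w y (e4 i) := by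
      intro i
      rw [ibp (inv_pow_contDiff x hε m) ((d1_contDiff hw i).of_le (by norm_num)) (d1_supp hc i)]
      simp_rw [inv_pow_fderiv x hε m]
      rw [← integral_const_mul, ← integral_neg]
      congr 1; ext y; ring
    simp_rw [h1]
    rw [← Finset.mul_sum, sum_ibp x hε (m+1) (hw.of_le (by norm_num)) hc]
    rw [← integral_neg, ← integral_const_mul, ← integral_const_mul]
    congr 1; ext y; push_cast; ring
  · intro i _
    exact ((inv_pow_contDiff x hε m).continuous.mul
      (d2_contDiff hw i).continuous).integrable_of_hasCompactSupport (d2_supp hc i).mul_left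

lemma repr_w {w : E4 → ℝ} (hw : ContDiff ℝ 3 w) (hc : HasCompactSupport w)
    (x : E4) {ε : ℝ} (hε : 0 < ε) :
    ∫ y, (ss x ε y)⁻¹ * fderiv ℝ (lap w) y (y - x)
      = 48 * ∫ y, ε ^ 2 * ((ss x ε y)⁻¹) ^ 4 * w y := by
  have hu := lap_contDiff hw
  have huc := lap_supp hc
  have hint : ∀ m, Integrable (fun y => ((ss x ε y)⁻¹) ^ m * lap w y) := fun m =>
    ((inv_pow_contDiff x hε m).continuous.mul hu.continuous).integrable_of_hasCompactSupport
      huc.mul_left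
  have hintw : ∀ m, Integrable (fun y => ((ss x ε y)⁻¹) ^ m * w y) := fun m =>
    ((inv_pow_contDiff x hε m).continuous.mul hw.continuous).integrable_of_hasCompactSupport
      hc.mul_left
  have h0 : ∫ y, (ss x ε y)⁻¹ * fderiv ℝ (lap w) y (y - x)
      = ∑ i, ∫ y, ((y - x) i * ((ss x ε y)⁻¹) ^ 1) * fderiv ℝ (lap w) y (e4 i) := by
    rw [← integral_finsetSum]
    · congr 1; ext y
      have : y - x = ∑ i, (y - x) i • e4 i := by
        ext j; simp [e4, Pi.single_apply]
      conv_lhs => rw [this, map_sum]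
      rw [Finset.mul_sum]
      refine Finset.sum_congr rfl fun i _ => ?_
      rw [map_smul, smul_eq_mul]; ring
    · intro i _
      exact ((coord_inv_pow_contDiff x hε 1 i).continuous.mul
        ((hu.continuous_fderiv (by norm_num)).clm_apply
          continuous_const)).integrable_of_hasCompactSupport (huc.fderiv_apply ℝ _).mul_left
  rw [h0, sum_ibp x hε 1 hu huc]
  have h1 : ∫ y, ((4 - 2 * ((1:ℕ):ℝ)) * ((ss x ε y)⁻¹) ^ 1
      + 2 * ((1:ℕ):ℝ) * ε * ((ss x ε y)⁻¹) ^ (1+1)) * lap w y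
      = 2 * (∫ y, ((ss x ε y)⁻¹) ^ 1 * lap w y) + 2 * ε * ∫ y, ((ss x ε y)⁻¹) ^ 2 * lap w y := by
    rw [← integral_const_mul, ← integral_const_mul, ← integral_add]
    · congr 1; ext y; push_cast; ring
    · exact (hint 1).const_mul _
    · exact (hint 2).const_mul _
  rw [h1, lap_inv_pow hw hc x hε 1, lap_inv_pow hw hc x hε 2]
  have key : ∀ a b : ℝ, ∀ m n : ℕ, ∫ y, (a * ((ss x ε y)⁻¹) ^ m + b * ((ss x ε y)⁻¹) ^ n) * (- w y)
      = -a * (∫ y, ((ss x ε y)⁻¹) ^ m * w y) - b * ∫ y, ((ss x ε y)⁻¹) ^ n * w y := by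
    intro a b m n
    rw [← integral_const_mul, ← integral_const_mul, ← integral_sub]
    · congr 1; ext y; ring
    · exact (hintw m).const_mul _
    · exact (hintw n).const_mul _
  rw [key, key]
  simp_rw [mul_assoc (ε ^ 2)]
  rw [integral_const_mul]
  push_cast
  norm_num
  ring

def bub (z : E4) : ℝ := ((1 + ‖z‖ ^ 2)⁻¹) ^ 4

lemma bub_pos (z : E4) : 0 < bub z := by unfold bub; positivity

lemma bub_cont : Continuous bub := by
  unfold bub
  exact (Continuous.inv₀ (by fun_prop) (fun z => by positivity)).pow 4

lemma bub_int : Integrable bub := by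
  have h := integrable_rpow_neg_one_add_norm_sq (E := E4) (μ := volume) (r := 8)
    (by simp; norm_num)
  refine h.congr (Eventually.of_forall fun z => ?_)
  have : (0:ℝ) < 1 + ‖z‖ ^ 2 := by positivity
  simp only [bub]
  rw [show (-8 / 2 : ℝ) = -((4:ℕ):ℝ) by norm_num, Real.rpow_neg this.le, Real.rpow_natCast, inv_pow]

def c0 : ℝ := 48 * ∫ z, bub z

lemma c0_pos : 0 < c0 := by
  unfold c0
  have : 0 < ∫ z, bub z :=
    (integral_pos_iff_support_of_nonneg (fun z => (bub_pos z).le) bub_int).2 (by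
      have : Function.support bub = Set.univ := by ext z; simp [(bub_pos z).ne']
      rw [this]; simp)
  positivity

lemma rescale {w : E4 → ℝ} (x : E4) {δ : ℝ} (hδ : 0 < δ) :
    ∫ y, (δ ^ 2) ^ 2 * ((ss x (δ ^ 2) y)⁻¹) ^ 4 * w y = ∫ z, bub z * w (x + δ • z) := by
  have h1 := integral_add_left_eq_self (μ := (volume : Measure E4))
    (fun y => (δ ^ 2) ^ 2 * ((ss x (δ ^ 2) y)⁻¹) ^ 4 * w y) x
  rw [← h1]
  have h2 := Measure.integral_comp_smul (volume : Measure E4)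
    (fun y => (δ ^ 2) ^ 2 * ((ss x (δ ^ 2) (x + y))⁻¹) ^ 4 * w (x + y)) δ
  have h3 : ∫ y, (δ ^ 2) ^ 2 * ((ss x (δ ^ 2) (x + y))⁻¹) ^ 4 * w (x + y) =
    δ ^ 4 * ∫ z, (δ ^ 2) ^ 2 * ((ss x (δ ^ 2) (x + δ • z))⁻¹) ^ 4 * w (x + δ • z) := by
    rw [h2]
    simp only [finrank_euclideanSpace, Fintype.card_fin, smul_eq_mul]
    rw [abs_of_pos (by positivity)]
    field_simp
  rw [h3, ← integral_const_mul]
  congr 1; ext z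
  simp only [ss, bub, add_sub_cancel_left, norm_smul, Real.norm_eq_abs, abs_of_pos hδ]
  rw [show (δ * ‖z‖) ^ 2 + δ ^ 2 = δ ^ 2 * (1 + ‖z‖ ^ 2) by ring]
  have : (0:ℝ) < 1 + ‖z‖ ^ 2 := by positivity
  field_simp

lemma rescale_tendsto {w : E4 → ℝ} (hw : Continuous w) (hc : HasCompactSupport w) (x : E4) :
    Tendsto (fun n : ℕ => 48 * ∫ z, bub z * w (x + (1 / ((n : ℝ) + 1)) • z)) atTop
      (nhds (c0 * w x)) := by
  obtain ⟨M, hM⟩ := hw.bounded_above_of_compact_support hc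
  have : c0 * w x = 48 * ∫ z, bub z * w x := by rw [integral_mul_const, c0]; ring
  rw [this]
  refine Tendsto.const_mul _ ?_
  refine tendsto_integral_of_dominated_convergence (fun z => bub z * M) ?_ (bub_int.mul_const M) ?_ ?_
  · intro n
    exact (bub_cont.mul (hw.comp (by fun_prop))).aestronglyMeasurable
  · intro n
    refine Eventually.of_forall fun z => ?_
    rw [norm_mul, Real.norm_of_nonneg (bub_pos z).le]
    exact mul_le_mul_of_nonneg_left (hM _) (bub_pos z).le
  · refine Eventually.of_forall fun z => ?_
    refine Tendsto.const_mul _ ?_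
    have h1 : Tendsto (fun n : ℕ => x + (1 / ((n : ℝ) + 1)) • z) atTop (nhds (x + (0:ℝ) • z)) :=
      tendsto_const_nhds.add (tendsto_one_div_add_atTop_nhds_zero_nat.smul_const z)
    rw [zero_smul, add_zero] at h1
    exact (hw.tendsto x).comp h1

lemma w_bound {w : E4 → ℝ} (hw : ContDiff ℝ 3 w) (hc : HasCompactSupport w) (x : E4) :
    ENNReal.ofReal (c0 * |w x|) ≤
      ∫⁻ y, ENNReal.ofReal (‖y - x‖⁻¹) * ENNReal.ofReal ‖fderiv ℝ (lap w) y‖ := by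
  have ht := (rescale_tendsto hw.continuous hc x).abs
  rw [abs_mul, abs_of_pos c0_pos] at ht
  refine le_of_tendsto (ENNReal.tendsto_ofReal ht) (Eventually.of_forall fun n => ?_)
  have hδ : (0:ℝ) < 1 / ((n : ℝ) + 1) := by positivity
  set δ := 1 / ((n : ℝ) + 1)
  rw [← rescale x hδ, ← repr_w hw hc x (by positivity : 0 < δ ^ 2)]
  rw [← Real.norm_eq_abs, ofReal_norm]
  refine (enorm_integral_le_lintegral_enorm _).trans (lintegral_mono fun y => ?_)
  rw [← ofReal_norm, ← ENNReal.ofReal_mul (by positivity)]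
  refine ENNReal.ofReal_le_ofReal ?_
  have hs := ss_pos x (by positivity : 0 < δ ^ 2) y
  rw [norm_mul, Real.norm_of_nonneg (inv_nonneg.2 hs.le)]
  have h1 := (fderiv ℝ (lap w) y).le_opNorm (y - x)
  have h2 : (ss x (δ^2) y)⁻¹ * ‖y - x‖ ≤ ‖y - x‖⁻¹ := by
    rcases (norm_nonneg (y - x)).eq_or_lt with h | h
    · simp [← h]
    · rw [← one_div ‖y - x‖, le_div_iff₀ h, inv_mul_eq_div, div_mul_eq_mul_div, div_le_one hs]
      unfold ss; nlinarith [sq_nonneg δ]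
  calc _ ≤ (ss x (δ^2) y)⁻¹ * (‖fderiv ℝ (lap w) y‖ * ‖y - x‖) := by gcongr
    _ = ((ss x (δ^2) y)⁻¹ * ‖y - x‖) * ‖fderiv ℝ (lap w) y‖ := by ring
    _ ≤ _ := by gcongr

def om : ℝ≥0∞ := volume (ball (0 : E4) 1)

lemma om_ne_top : om ≠ ⊤ := measure_ball_lt_top.ne

lemma ball_vol (x : E4) {r : ℝ} (hr : 0 ≤ r) : volume (ball x r) = ENNReal.ofReal (r ^ 4) * om := by
  have := Measure.addHaar_ball (volume : Measure E4) x hr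
  simpa [om] using this

lemma bathtub (x : E4) {A : Set E4} (hA : volume A ≠ ⊤) :
    ∫⁻ y in A, ENNReal.ofReal (‖y - x‖⁻¹) ≤
      (1 + om) * ENNReal.ofReal ((volume A).toReal ^ (3/4 : ℝ)) := by
  rcases eq_or_ne (volume A) 0 with h0 | h0
  · rw [setLIntegral_measure_zero _ _ h0]; exact zero_le
  have ha : 0 < (volume A).toReal := ENNReal.toReal_pos h0 hA
  set a := (volume A).toReal with ha_def
  have hAa : volume A = ENNReal.ofReal a := (ENNReal.ofReal_toReal hA).symm
  set T : ℝ := a ^ (-1/4 : ℝ) with hT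
  have hTpos : 0 < T := by positivity
  rw [lintegral_eq_lintegral_meas_lt _ (Eventually.of_forall fun y => by positivity)
    (by fun_prop : Measurable fun y : E4 => ‖y - x‖⁻¹).aemeasurable]
  rw [← Set.Ioc_union_Ioi_eq_Ioi hTpos.le]
  refine (lintegral_union_le _ _ _).trans ?_
  rw [add_mul, one_mul]
  refine add_le_add ?_ ?_
  · calc _ ≤ ∫⁻ t in Set.Ioc 0 T, ENNReal.ofReal a := by
          refine lintegral_mono fun t => ?_
          refine (measure_mono (Set.subset_univ _)).trans ?_
          simp [hAa]
      _ = ENNReal.ofReal (a * T) := by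
          rw [setLIntegral_const, Real.volume_Ioc, sub_zero, ← ENNReal.ofReal_mul ha.le]
      _ = _ := by
          congr 1
          rw [hT]; nth_rw 1 [← Real.rpow_one a]; rw [← Real.rpow_add ha]; norm_num
  · calc _ ≤ ∫⁻ t in Set.Ioi T, ENNReal.ofReal (t ^ (-4 : ℝ)) * om := by
          refine setLIntegral_mono' measurableSet_Ioi fun t ht => ?_
          have htp : 0 < t := hTpos.trans ht
          have hsub : {y : E4 | t < ‖y - x‖⁻¹} ⊆ ball x t⁻¹ := by
            intro y hy
            simp only [Set.mem_ofPred_eq] at hy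
            rw [mem_ball, dist_eq_norm]
            have : 0 < ‖y - x‖ := inv_pos.1 (htp.trans hy)
            exact (lt_inv_comm₀ htp this).1 hy
          refine (measure_mono hsub).trans ((Measure.restrict_apply_le _ _).trans ?_)
          rw [ball_vol x (by positivity)]
          rw [Real.rpow_neg htp.le, inv_pow]
          rw [show (4:ℝ) = ((4:ℕ):ℝ) by norm_num, Real.rpow_natCast]
      _ = ENNReal.ofReal (∫ t in Set.Ioi T, t ^ (-4 : ℝ)) * om := by
          rw [lintegral_mul_const _ (by fun_prop), ofReal_integral_eq_lintegral_ofReal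
            (integrableOn_Ioi_rpow_of_lt (by norm_num) hTpos)]
          refine (ae_restrict_mem measurableSet_Ioi).mono fun t ht => ?_
          have htp : 0 < t := hTpos.trans ht
          simp only [Pi.zero_apply]; positivity
      _ ≤ _ := by
          rw [mul_comm]
          gcongr
          rw [integral_Ioi_rpow_of_lt (by norm_num) hTpos, hT, ← Real.rpow_mul ha.le]
          norm_num
          have : 0 < a ^ (3/4 : ℝ) := by positivity
          linarith

/-- standing facts for a bounded function with finite measure support -/
structure Nice (F : E4 → ℝ) (M : ℝ) : Prop where
  meas : Measurable F
  nonneg : ∀ y, 0 ≤ F y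
  bdd : ∀ y, F y ≤ M
  fin : volume {y | 0 < |F y|} ≠ ⊤

namespace Nice
variable {F : E4 → ℝ} {M : ℝ}

lemma M_nonneg (h : Nice F M) : 0 ≤ M := (h.nonneg 0).trans (h.bdd 0)

lemma fin' (h : Nice F M) {s : ℝ} (hs : 0 ≤ s) : volume {y | s < |F y|} ≠ ⊤ :=
  ne_top_of_le_ne_top h.fin (measure_mono fun _ hy => lt_of_le_of_lt hs hy)

lemma M_mem (h : Nice F M) {t : ℝ} (ht : 0 ≤ t) :
    M ∈ {s : ℝ | 0 ≤ s ∧ (volume {x : E4 | s < |F x|}).toReal ≤ t} := by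
  refine ⟨h.M_nonneg, ?_⟩
  have : {x : E4 | M < |F x|} = ∅ := by
    ext y; simp [abs_of_nonneg (h.nonneg y), h.bdd y]
  simpa [this] using ht

lemma bddBelow (t : ℝ) :
    BddBelow {s : ℝ | 0 ≤ s ∧ (volume {x : E4 | s < |F x|}).toReal ≤ t} :=
  ⟨0, fun _ hs => hs.1⟩

lemma rearr_nonneg (t : ℝ) : 0 ≤ rearr F t := Real.sInf_nonneg fun _ hs => hs.1

lemma rearr_le (h : Nice F M) {t : ℝ} (ht : 0 ≤ t) : rearr F t ≤ M :=
  csInf_le (bddBelow t) (h.M_mem ht)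

lemma rearr_zero (h : Nice F M) {t : ℝ} (ht : (volume {y | 0 < |F y|}).toReal ≤ t) :
    rearr F t = 0 :=
  le_antisymm (csInf_le (bddBelow t) ⟨le_rfl, ht⟩) (rearr_nonneg t)

lemma rearr_anti (h : Nice F M) : AntitoneOn (rearr F) (Set.Ioi 0) := by
  intro a ha b _ hab
  exact csInf_le_csInf (bddBelow b) ⟨M, h.M_mem (le_of_lt ha)⟩ fun s hs => ⟨hs.1, hs.2.trans hab⟩

lemma le_rearr (h : Nice F M) {t l : ℝ} (ht : 0 ≤ t) (hl : 0 ≤ l)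
    (htl : t < (volume {y | l < |F y|}).toReal) : l ≤ rearr F t := by
  refine le_csInf ⟨M, h.M_mem ht⟩ fun s hs => ?_
  by_contra! hsl
  have := ENNReal.toReal_mono (h.fin' hs.1)
    (measure_mono (fun y hy => lt_trans hsl hy : {y | l < |F y|} ⊆ {y | s < |F y|}))
  linarith [hs.2]

lemma rearr_aem (h : Nice F M) : AEMeasurable (rearr F) (volume.restrict (Set.Ioi 0)) :=
  aemeasurable_restrict_of_antitoneOn measurableSet_Ioi h.rearr_anti

lemma rearr_int (h : Nice F M) : IntegrableOn (rearr F) (Set.Ioi 0) := by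
  set V := (volume {y | 0 < |F y|}).toReal
  have hg : IntegrableOn ((Set.Ioo 0 V).indicator fun _ => M) (Set.Ioi 0) := by
    refine Integrable.integrableOn ?_
    rw [integrable_indicator_iff measurableSet_Ioo]
    exact integrableOn_const (by simp)
  refine Integrable.mono' hg h.rearr_aem.aestronglyMeasurable ?_
  refine (ae_restrict_mem measurableSet_Ioi).mono fun t ht => ?_
  rw [Real.norm_of_nonneg (rearr_nonneg t)]
  by_cases htV : t < V
  · rw [Set.indicator_of_mem (show t ∈ Set.Ioo 0 V from ⟨ht, htV⟩)]
    exact h.rearr_le (le_of_lt ht)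
  · rw [h.rearr_zero (not_lt.1 htV)]
    exact Set.indicator_nonneg (fun _ _ => h.M_nonneg) _

lemma prim_mono (h : Nice F M) : Monotone (fun t => ∫ s in Set.Ioo 0 t, rearr F s) := by
  intro a b hab
  exact setIntegral_mono_set (h.rearr_int.mono_set Set.Ioo_subset_Ioi_self)
    (Eventually.of_forall fun s => rearr_nonneg s)
    (Set.Ioo_subset_Ioo_right hab).eventuallyLE

lemma prim_nonneg (t : ℝ) : 0 ≤ ∫ s in Set.Ioo 0 t, rearr F s :=
  integral_nonneg fun s => rearr_nonneg s

lemma prim_le_total (h : Nice F M) (t : ℝ) :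
    ∫ s in Set.Ioo 0 t, rearr F s ≤ ∫ s in Set.Ioi 0, rearr F s :=
  setIntegral_mono_set h.rearr_int (Eventually.of_forall fun s => rearr_nonneg s)
    Set.Ioo_subset_Ioi_self.eventuallyLE

lemma prim_le (h : Nice F M) {t : ℝ} (ht : 0 < t) :
    ∫ s in Set.Ioo 0 t, rearr F s ≤ M * t := by
  have : ∫ s in Set.Ioo 0 t, rearr F s ≤ ∫ s in Set.Ioo 0 t, M :=
    setIntegral_mono_on (h.rearr_int.mono_set Set.Ioo_subset_Ioi_self)
      (integrableOn_const (by simp)) measurableSet_Ioo fun s hs => h.rearr_le hs.1.le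
  simpa [ht.le, mul_comm] using this

lemma le_prim (h : Nice F M) {t : ℝ} (ht : 0 < t) :
    rearr F t * t ≤ ∫ s in Set.Ioo 0 t, rearr F s := by
  have : ∫ s in Set.Ioo 0 t, rearr F t ≤ ∫ s in Set.Ioo 0 t, rearr F s :=
    setIntegral_mono_on (integrableOn_const (by simp))
      (h.rearr_int.mono_set Set.Ioo_subset_Ioi_self)
      measurableSet_Ioo fun s hs => h.rearr_anti hs.1 ht hs.2.le
  simpa [ht.le, mul_comm] using this

lemma integrand_int (h : Nice F M) :
    IntegrableOn (fun t : ℝ => t ^ (1/(4/3 : ℝ) - 1) * ((1/t) * ∫ s in Set.Ioo 0 t, rearr F s))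
      (Set.Ioi 0) := by
  have hm : Measurable
      (fun t : ℝ => t ^ (1/(4/3 : ℝ) - 1) * ((1/t) * ∫ s in Set.Ioo 0 t, rearr F s)) := by
    have := h.prim_mono.measurable
    fun_prop
  rw [← Set.Ioc_union_Ioi_eq_Ioi (zero_le_one' ℝ)]
  refine IntegrableOn.union ?_ ?_
  · have h1 : IntegrableOn (fun t : ℝ => M * t ^ (-1/4 : ℝ)) (Set.Ioc 0 1) := by
      have := intervalIntegral.intervalIntegrable_rpow' (a := 0) (b := 1) (r := -1/4) (by norm_num)
      rw [intervalIntegrable_iff_integrableOn_Ioc_of_le zero_le_one] at this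
      exact this.const_mul M
    refine Integrable.mono' h1 hm.aestronglyMeasurable ?_
    refine (ae_restrict_mem measurableSet_Ioc).mono fun t ht => ?_
    have htp : 0 < t := ht.1
    have hp := prim_nonneg (F := F) t
    rw [Real.norm_of_nonneg (by positivity), mul_comm M]
    norm_num
    gcongr
    rw [inv_mul_le_iff₀ htp, mul_comm]
    exact h.prim_le htp
  · have h1 : IntegrableOn (fun t : ℝ => (∫ s in Set.Ioi 0, rearr F s) * t ^ (-5/4 : ℝ))
        (Set.Ioi 1) :=
      (integrableOn_Ioi_rpow_of_lt (by norm_num) one_pos).const_mul _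
    refine Integrable.mono' h1 hm.aestronglyMeasurable ?_
    refine (ae_restrict_mem measurableSet_Ioi).mono fun t ht => ?_
    have htp : 0 < t := one_pos.trans ht
    have hp := prim_nonneg (F := F) t
    rw [Real.norm_of_nonneg (by positivity), ← mul_assoc, mul_comm]
    have : t ^ (1/(4/3 : ℝ) - 1) * (1/t) = t ^ (-5/4 : ℝ) := by
      rw [one_div t, ← Real.rpow_neg_one t, ← Real.rpow_add htp]; norm_num
    rw [this]
    exact mul_le_mul_of_nonneg_right (h.prim_le_total t) (by positivity)

lemma Lp1_nonneg : 0 ≤ Lp1norm (4/3) F := by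
  unfold Lp1norm
  refine setIntegral_nonneg measurableSet_Ioi fun t ht => ?_
  have htp : (0:ℝ) < t := ht
  have hp := prim_nonneg (F := F) t
  positivity

lemma le_Lp1 (h : Nice F M) :
    ∫⁻ t in Set.Ioi (0:ℝ), ENNReal.ofReal (t ^ (-1/4 : ℝ)) * ENNReal.ofReal (rearr F t)
      ≤ ENNReal.ofReal (Lp1norm (4/3) F) := by
  unfold Lp1norm
  rw [ofReal_integral_eq_lintegral_ofReal h.integrand_int]
  · refine setLIntegral_mono' measurableSet_Ioi fun t ht => ?_
    have htp : (0:ℝ) < t := ht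
    rw [← ENNReal.ofReal_mul (by positivity)]
    refine ENNReal.ofReal_le_ofReal ?_
    norm_num
    gcongr
    rw [le_inv_mul_iff₀ htp, mul_comm]
    exact h.le_prim htp
  · refine (ae_restrict_mem measurableSet_Ioi).mono fun t ht => ?_
    have htp : (0:ℝ) < t := ht
    have hp := prim_nonneg (F := F) t
    simp only [Pi.zero_apply]
    positivity

lemma lower (h : Nice F M) :
    ∫⁻ l in Set.Ioi (0:ℝ), ENNReal.ofReal ((volume {y | l < |F y|}).toReal ^ (3/4 : ℝ))
      ≤ ENNReal.ofReal (Lp1norm (4/3) F) := by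
  refine le_trans ?_ h.le_Lp1
  have hk : Measurable (fun t : ℝ => ENNReal.ofReal (t ^ (-1/4 : ℝ))) := by fun_prop
  have h1 := lintegral_withDensity_eq_lintegral_mul₀ (μ := volume.restrict (Set.Ioi (0:ℝ)))
    hk.aemeasurable h.rearr_aem.ennreal_ofReal
  simp only [Pi.mul_apply] at h1
  rw [← h1, lintegral_eq_lintegral_meas_le _ (Eventually.of_forall fun t => rearr_nonneg t)
    (h.rearr_aem.mono_ac (withDensity_absolutelyContinuous _ _))]
  refine setLIntegral_mono' measurableSet_Ioi fun l hl => ?_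
  have hl0 : (0:ℝ) < l := hl
  set m := (volume {y | l < |F y|}).toReal
  have hm : 0 ≤ m := ENNReal.toReal_nonneg
  have hsub : Set.Ioo 0 m ⊆ {t | l ≤ rearr F t} := fun t ht => h.le_rearr ht.1.le hl0.le ht.2
  refine le_trans ?_ (measure_mono hsub)
  rw [withDensity_apply _ measurableSet_Ioo, Measure.restrict_restrict measurableSet_Ioo,
    Set.inter_eq_left.2 Set.Ioo_subset_Ioi_self]
  have hii := intervalIntegral.intervalIntegrable_rpow' (a := 0) (b := m) (r := -1/4) (by norm_num)
  rw [intervalIntegrable_iff_integrableOn_Ioo_of_le hm] at hii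
  rw [← ofReal_integral_eq_lintegral_ofReal hii]
  · refine ENNReal.ofReal_le_ofReal ?_
    rw [← integral_Ioc_eq_integral_Ioo, ← intervalIntegral.integral_of_le hm,
      integral_rpow (Or.inl (by norm_num))]
    norm_num
    have : 0 ≤ m ^ (3/4 : ℝ) := by positivity
    linarith
  · refine (ae_restrict_mem measurableSet_Ioo).mono fun t ht => ?_
    have htp : (0:ℝ) < t := ht.1
    simp only [Pi.zero_apply]
    positivity

lemma duality (h : Nice F M) (x : E4) :
    ∫⁻ y, ENNReal.ofReal (‖y - x‖⁻¹) * ENNReal.ofReal (F y)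
      ≤ (1 + om) * ENNReal.ofReal (Lp1norm (4/3) F) := by
  have hk : Measurable (fun y : E4 => ENNReal.ofReal (‖y - x‖⁻¹)) := by fun_prop
  have h1 := lintegral_withDensity_eq_lintegral_mul (volume : Measure E4) hk
    h.meas.ennreal_ofReal
  simp only [Pi.mul_apply] at h1
  rw [← h1, lintegral_eq_lintegral_meas_lt _ (Eventually.of_forall h.nonneg) h.meas.aemeasurable]
  refine le_trans ?_ (mul_le_mul_right h.lower (1 + om))
  rw [← lintegral_const_mul' _ _ (by simp [om_ne_top])]
  refine setLIntegral_mono' measurableSet_Ioi fun l hl => ?_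
  have hl0 : (0:ℝ) < l := hl
  have he : {y | l < F y} = {y | l < |F y|} := by
    ext y; simp [abs_of_nonneg (h.nonneg y)]
  rw [he, withDensity_apply _ (measurableSet_lt measurable_const h.meas.abs)]
  exact bathtub x (h.fin' hl0.le)

end Nice

lemma sup_bound {w : E4 → ℝ} (hw : ContDiff ℝ 3 w) (hc : HasCompactSupport w) (x : E4) :
    |w x| ≤ ((1 + om).toReal / c0) * Lp1norm (4/3) (fun y => ‖fderiv ℝ (fun z => lap w z) y‖) := by
  have hcont : Continuous (fun y => ‖fderiv ℝ (lap w) y‖) :=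
    ((lap_contDiff hw).continuous_fderiv (by norm_num)).norm
  have hsup : HasCompactSupport (fun y => ‖fderiv ℝ (lap w) y‖) := ((lap_supp hc).fderiv ℝ).norm
  obtain ⟨M, hM⟩ := hcont.bounded_above_of_compact_support hsup
  have hN : Nice (fun y => ‖fderiv ℝ (lap w) y‖) M := by
    refine ⟨hcont.measurable, fun y => norm_nonneg _, fun y => ?_, ?_⟩
    · simpa using hM y
    · refine ne_top_of_le_ne_top hsup.isCompact.measure_lt_top.ne (measure_mono fun y hy => ?_)
      refine subset_tsupport _ ?_
      simpa using hy
  have h1 := (w_bound hw hc x).trans (hN.duality x)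
  have hom : (1 + om) ≠ ⊤ := by simp [om_ne_top]
  rw [← ENNReal.ofReal_toReal hom, ← ENNReal.ofReal_mul ENNReal.toReal_nonneg,
    ENNReal.ofReal_le_ofReal_iff (mul_nonneg ENNReal.toReal_nonneg Nice.Lp1_nonneg)] at h1
  rw [div_mul_eq_mul_div, le_div_iff₀ c0_pos, mul_comm]
  exact h1

lemma norm_dlog (z : E4) (hz : z ≠ 0) : ‖fderiv ℝ (fun v : E4 => Real.log ‖v‖) z‖ = ‖z‖⁻¹ := by
  have hn : ‖z‖ ≠ 0 := norm_ne_zero_iff.2 hz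
  have h1 : HasFDerivAt (fun v : E4 => Real.log ‖v‖)
      ((2:ℝ)⁻¹ • ((‖z‖ ^ 2)⁻¹ • (2 • innerSL ℝ z))) z := by
    have h2 := ((((hasFDerivAt_id (𝕜 := ℝ) z).norm_sq).log
      (by simpa using hz)).const_mul (2:ℝ)⁻¹)
    have : (fun v : E4 => Real.log ‖v‖) = fun v : E4 => (2:ℝ)⁻¹ * Real.log (‖id v‖ ^ 2) := by
      ext v; rw [Real.log_pow]; simp
    rw [this]
    refine h2.congr_fderiv ?_
    ext v; simp
  rw [h1.fderiv]
  have : (2:ℝ)⁻¹ • ((‖z‖ ^ 2)⁻¹ • (2 • innerSL ℝ z)) = (‖z‖ ^ 2)⁻¹ • innerSL ℝ z := by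
    ext v; simp; ring
  rw [this, norm_smul, innerSL_apply_norm]
  rw [Real.norm_of_nonneg (by positivity)]
  field_simp

lemma wnorm_eq : 0 < (wnorm 4 (fun z => ‖fderiv ℝ (fun v : E4 => Real.log ‖v‖) z‖)).toReal := by
  have hset : ∀ l : ℝ, 0 < l →
      volume {x : E4 | l < |‖fderiv ℝ (fun v : E4 => Real.log ‖v‖) x‖|}
        = ENNReal.ofReal (l⁻¹ ^ 4) * om := by
    intro l hl
    rw [← ball_vol 0 (by positivity)]
    refine measure_congr ?_
    have h0 : ∀ᵐ z : E4 ∂volume, z ≠ 0 := by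
      simp [ae_iff]
    refine h0.mono fun z hz => ?_
    have hzp : 0 < ‖z‖ := norm_pos_iff.2 hz
    refine propext ?_
    show l < |‖fderiv ℝ (fun v : E4 => Real.log ‖v‖) z‖| ↔ z ∈ ball (0:E4) l⁻¹
    rw [abs_norm, norm_dlog z hz, mem_ball_zero_iff]
    exact lt_inv_comm₀ hl hzp
  have hval : wnorm 4 (fun z => ‖fderiv ℝ (fun v : E4 => Real.log ‖v‖) z‖) = om ^ (1/4 : ℝ) := by
    unfold wnorm
    have : ∀ l ∈ Set.Ioi (0:ℝ), ENNReal.ofReal l *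
        volume {x : E4 | l < |‖fderiv ℝ (fun v : E4 => Real.log ‖v‖) x‖|} ^ (1/4 : ℝ)
        = om ^ (1/4 : ℝ) := by
      intro l hl
      have hl0 : (0:ℝ) < l := hl
      rw [hset l hl, ENNReal.mul_rpow_of_nonneg _ _ (by norm_num), ← mul_assoc,
        ENNReal.ofReal_rpow_of_nonneg (by positivity) (by norm_num),
        ← ENNReal.ofReal_mul hl0.le]
      have : l * (l⁻¹ ^ 4) ^ (1/4 : ℝ) = 1 := by
        rw [← Real.rpow_natCast, ← Real.rpow_mul (by positivity)]
        norm_num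
        exact mul_inv_cancel₀ hl0.ne'
      rw [this]; simp
    rw [biSup_congr this]
    exact biSup_const ⟨1, by simp⟩
  rw [hval]
  have h0 : om ≠ 0 := (measure_ball_pos volume (0:E4) one_pos).ne'
  exact ENNReal.toReal_pos (by simp [h0, om_ne_top]) (by simp [h0, om_ne_top])

lemma avg_bound {w : E4 → ℝ} (hc : HasCompactSupport w) {B : ℝ} (hB : ∀ x, |w x| ≤ B) :
    |(volume (tsupport w)).toReal⁻¹ * ∫ y, w y| ≤ B := by
  have hB0 : 0 ≤ B := (abs_nonneg _).trans (hB 0)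
  have hfin : volume (tsupport w) < ⊤ := hc.isCompact.measure_lt_top
  have h1 : ∫ y, w y = ∫ y in tsupport w, w y :=
    (setIntegral_eq_integral_of_forall_compl_eq_zero fun y hy => image_eq_zero_of_notMem_tsupport hy).symm
  have h2 : ‖∫ y in tsupport w, w y‖ ≤ B * (volume (tsupport w)).toReal :=
    norm_setIntegral_le_of_norm_le_const hfin fun y _ => hB y
  rw [abs_mul, h1, abs_of_nonneg (by positivity)]
  rw [Real.norm_eq_abs] at h2
  rcases (ENNReal.toReal_nonneg (a := volume (tsupport w))).eq_or_lt with h | h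
  · rw [← h]; simpa using hB0
  · rw [inv_mul_le_iff₀ h, mul_comm]; exact h2

theorem oscillation_bound_by_DLap :
    ∃ C : ℝ, 0 < C ∧ ∀ w : E4 → ℝ,
      ContDiff ℝ 3 w → HasCompactSupport w →
      (∀ x : E4,
        |w x - (volume (tsupport w)).toReal⁻¹ * ∫ y, w y| ≤
          C * (wnorm 4 (fun z => ‖fderiv ℝ (fun v : E4 => Real.log ‖v‖) z‖)).toReal *
            Lp1norm (4/3) (fun y => ‖fderiv ℝ (fun z => lap w z) y‖)) ∧
      ∀ x y : E4, |w x - w y| ≤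
          C * Lp1norm (4/3) (fun y => ‖fderiv ℝ (fun z => lap w z) y‖) := by

  set W := (wnorm 4 (fun z => ‖fderiv ℝ (fun v : E4 => Real.log ‖v‖) z‖)).toReal with hW
  have hWp : 0 < W := wnorm_eq
  set K := (1 + om).toReal / c0 with hK
  have hKp : 0 < K := by
    refine div_pos (ENNReal.toReal_pos (by simp) (by simp [om_ne_top])) c0_pos
  refine ⟨2 * K + 2 * K / W, by positivity, fun w hw hc => ?_⟩
  set L := Lp1norm (4/3) (fun y => ‖fderiv ℝ (fun z => lap w z) y‖) with hL
  have hL0 : 0 ≤ L := Nice.Lp1_nonneg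
  have hb : ∀ x, |w x| ≤ K * L := fun x => sup_bound hw hc x
  have hKL : 0 ≤ K * L := by positivity
  constructor
  · intro x
    have h1 := avg_bound hc hb
    have h2 := abs_sub (w x) ((volume (tsupport w)).toReal⁻¹ * ∫ y, w y)
    have h3 : (2 * K + 2 * K / W) * W * L = 2 * (K * L) * W + 2 * (K * L) := by
      field_simp
    have h4 : 0 ≤ (K * L) * W := by positivity
    rw [h3]
    linarith [hb x]
  · intro x y
    have h2 := abs_sub (w x) (w y)
    have h4 : 0 ≤ 2 * K / W * L := by positivity
    rw [add_mul]
    linarith [hb x, hb y]
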